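/- arXiv:1411.0882 — 2 statements merged into one kernel-verified Lean document; each statement's English description precedes it below -/
import Mathlib

section
/- Let θ be a real number with 0 < θ ≤ π/3, and let A, B, C be affinely independent points in the Euclidean plane ℝ² such that all three interior angles of the triangle ABC are at least θ. Then the diameter of the triangular region is at most 2·cot(θ/2) times the inradius of the triangle. -/
open Real EuclideanGeometry Metric

/-- The triangular region determined by three points in the plane:
the convex hull of the vertex set. -/
def triangleRegion (A B C : EuclideanSpace ℝ (Fin 2)) : Set (EuclideanSpace ℝ (Fin 2)) :=
  convexHull ℝ {A, B, C}

/-- The inradius of the triangle with vertices `A`, `B`, `C`: the supremum of all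
radii `r ≥ 0` such that some closed ball of radius `r` is contained in the
triangular region. -/
noncomputable def triangleInradius (A B C : EuclideanSpace ℝ (Fin 2)) : ℝ :=
  sSup {r : ℝ | 0 ≤ r ∧ ∃ c : EuclideanSpace ℝ (Fin 2),
    closedBall c r ⊆ triangleRegion A B C}

/-!
Let `I` be the incenter and `r` the radius of the incircle. It touches the side `BC` at a point `X`
between `B` and `C`, and the right triangle `BXI` gives `BX = r cot ∠IBX`. As `BI` makes the same
angle with both sides at `B`, the triangle inequality for angles yields
`θ ≤ ∠ABC ≤ ∠ABI + ∠IBC = 2 ∠IBX`, so `BX ≤ r cot (θ / 2)`, and likewise for `CX`. Hence every side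
is at most `2 r cot (θ / 2)`. Finally, the ball of radius `r` about `I` lies in the triangle: its
points are within `r` of `I`, whose signed distance to each side is `r`, so they stay on the inner
side of all three lines.
-/

open Module (finrank)

/-- The inradius of a subset `s` of a metric space: the supremum of the radii of the closed balls
contained in `s`. If these radii are unbounded, it is `0` by the convention for `sSup`. -/
noncomputable def inradius {X : Type*} [PseudoMetricSpace X] (s : Set X) : ℝ :=
  sSup {r : ℝ | 0 ≤ r ∧ ∃ c : X, closedBall c r ⊆ s}

theorem le_inradius_of_closedBall_subset {E : Type*} [NormedAddCommGroup E] [NormedSpace ℝ E]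
    [Nontrivial E] {s : Set E} (hs : Bornology.IsBounded s) {c : E} {r : ℝ} (hr : 0 ≤ r)
    (hcr : closedBall c r ⊆ s) : r ≤ inradius s := by
  refine le_csSup ⟨diam s / 2, ?_⟩ ⟨hr, c, hcr⟩
  rintro ρ ⟨hρ, d, hdρ⟩
  have hdiam : 2 * ρ ≤ diam s := (diam_closedBall_eq d hρ).ge.trans (diam_mono hdρ hs)
  linarith

theorem antitoneOn_cot : AntitoneOn Real.cot (Set.Ioo 0 π) := by
  intro x hx y hy hxy
  have hsub : 0 ≤ sin (y - x) :=
    sin_nonneg_of_nonneg_of_le_pi (sub_nonneg.2 hxy) (by linarith [hx.1, hy.2])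
  rw [sin_sub] at hsub
  rw [cot_eq_cos_div_sin, cot_eq_cos_div_sin,
    div_le_div_iff₀ (sin_pos_of_mem_Ioo hy) (sin_pos_of_mem_Ioo hx)]
  linarith

theorem diam_closedInterior_le {E : Type*} [SeminormedAddCommGroup E] [NormedSpace ℝ E] {n : ℕ}
    (s : Affine.Simplex ℝ E n) {d : ℝ} (hd : ∀ i j, dist (s.points i) (s.points j) ≤ d) :
    diam s.closedInterior ≤ d := by
  rw [← s.convexHull_eq_closedInterior, convexHull_diam]
  refine diam_le_of_forall_dist_le (dist_nonneg.trans (hd 0 0)) ?_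
  rintro _ ⟨i, rfl⟩ _ ⟨j, rfl⟩
  exact hd i j

section EuclideanSimplex

variable {V P : Type*} [NormedAddCommGroup V] [InnerProductSpace ℝ V] [MetricSpace P]
  [NormedAddTorsor V P]

theorem cot_half_nonneg_of_le_angle {p₁ p₂ p₃ : P} {θ : ℝ} (hθ : 0 < θ)
    (hangle : θ ≤ ∠ p₁ p₂ p₃) : 0 ≤ Real.cot (θ / 2) := by
  have hpi : θ ≤ π := hangle.trans (angle_le_pi _ _ _)
  simpa [cot_eq_cos_div_sin] using
    antitoneOn_cot ⟨by linarith, by linarith⟩ ⟨by linarith, by linarith⟩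
      (show θ / 2 ≤ π / 2 by linarith)

theorem abs_signedInfDist_sub_signedInfDist_le_dist (S : AffineSubspace ℝ P) [Nonempty S]
    [S.direction.HasOrthogonalProjection] (o p q : P) :
    |S.signedInfDist o p - S.signedInfDist o q| ≤ dist p q := by
  rw [AffineSubspace.signedInfDist_def, signedDist_triangle_left, dist_comm]
  exact abs_signedDist_le_dist _ _ _

variable {n : ℕ} [NeZero n] (s : Affine.Simplex ℝ P n)

theorem mem_closedInterior_iff_forall_signedInfDist_nonneg {p : P}
    (hp : p ∈ affineSpan ℝ (Set.range s.points)) :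
    p ∈ s.closedInterior ↔ ∀ i, 0 ≤ s.signedInfDist i p := by
  obtain ⟨w, hw, rfl⟩ := eq_affineCombination_of_mem_affineSpan_of_fintype hp
  have nonneg_iff (i : Fin (n + 1)) :
      0 ≤ s.signedInfDist i (Finset.univ.affineCombination ℝ s.points w) ↔ 0 ≤ w i := by
    rw [s.signedInfDist_affineCombination i hw, ← dist_eq_norm_vsub]
    exact mul_nonneg_iff_of_pos_right (s.height_pos i)
  simp_rw [Affine.Simplex.affineCombination_mem_closedInterior_iff hw, nonneg_iff]
  refine ⟨fun h i => (h i).1, fun h i => ⟨h i, ?_⟩⟩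
  rw [← hw]
  exact Finset.single_le_sum (fun j _ => h j) (Finset.mem_univ i)

theorem mem_closedInterior_of_dist_incenter_le_inradius {p : P}
    (hp : p ∈ affineSpan ℝ (Set.range s.points)) (hdist : dist p s.incenter ≤ s.inradius) :
    p ∈ s.closedInterior := by
  refine (mem_closedInterior_iff_forall_signedInfDist_nonneg s hp).2 fun i => ?_
  have hlip : |s.signedInfDist i p - s.signedInfDist i s.incenter| ≤ dist p s.incenter :=
    abs_signedInfDist_sub_signedInfDist_le_dist _ _ _ _
  rw [s.signedInfDist_incenter] at hlip
  linarith [neg_le_of_abs_le hlip]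

theorem closedBall_incenter_inradius_subset_closedInterior (hn : finrank ℝ V = n) :
    closedBall s.incenter s.inradius ⊆ s.closedInterior := by
  have : FiniteDimensional ℝ V := .of_finrank_pos (hn ▸ NeZero.pos n)
  have hspan : affineSpan ℝ (Set.range s.points) = ⊤ :=
    s.independent.affineSpan_eq_top_iff_card_eq_finrank_add_one.2 (by simp [hn])
  exact fun p hp => mem_closedInterior_of_dist_incenter_le_inradius s
    (hspan ▸ AffineSubspace.mem_top ℝ V p) (mem_closedBall.1 hp)

theorem simplex_inradius_le_inradius_closedInterior (s : Affine.Simplex ℝ V n)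
    (hn : finrank ℝ V = n) : s.inradius ≤ inradius s.closedInterior := by
  have : Nontrivial V := Module.nontrivial_of_finrank_pos (hn ▸ NeZero.pos n)
  exact le_inradius_of_closedBall_subset s.isCompact_closedInterior.isBounded s.inradius_pos.le
    (closedBall_incenter_inradius_subset_closedInterior s hn)

variable {i j : Fin (n + 1)} {p : P}

theorem point_mem_affineSpan_faceOpposite (hji : j ≠ i) :
    s.points j ∈ affineSpan ℝ (Set.range (s.faceOpposite i).points) := by
  rw [s.range_faceOpposite_points]
  exact mem_affineSpan ℝ (Set.mem_image_of_mem _ hji)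

theorem angle_incenter_touchpoint_eq_pi_div_two
    (hp : p ∈ affineSpan ℝ (Set.range (s.faceOpposite i).points)) :
    ∠ s.incenter (s.touchpoint ∅ i) p = π / 2 :=
  angle_self_orthogonalProjection s.incenter hp

theorem dist_touchpoint_eq_cot_mul_inradius
    (hp : p ∈ affineSpan ℝ (Set.range (s.faceOpposite i).points)) :
    dist p (s.touchpoint ∅ i) = Real.cot (∠ s.incenter p (s.touchpoint ∅ i)) * s.inradius := by
  have hne : s.incenter ≠ s.touchpoint ∅ i := by
    rw [← dist_pos, s.dist_incenter]
    exact s.inradius_pos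
  rw [← dist_div_tan_angle_of_angle_eq_pi_div_two
    (angle_incenter_touchpoint_eq_pi_div_two s hp) (.inl hne), s.dist_incenter, div_eq_inv_mul,
    tan_inv_eq_cot, angle_comm]

end EuclideanSimplex

section Triangle

variable {V P : Type*} [NormedAddCommGroup V] [InnerProductSpace ℝ V] [MetricSpace P]
  [NormedAddTorsor V P] (t : Affine.Triangle ℝ P) {i j k : Fin 3} {θ : ℝ}

theorem angle_le_two_mul_angle_incenter_touchpoint (hij : i ≠ j) (hik : i ≠ k) (hjk : j ≠ k) :
    ∠ (t.points i) (t.points j) (t.points k) ≤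
      2 * ∠ t.incenter (t.points j) (t.touchpoint ∅ i) := by
  have hsame : ∠ t.incenter (t.points j) (t.touchpoint ∅ k) =
      ∠ t.incenter (t.points j) (t.touchpoint ∅ i) :=
    t.angle_incenter_touchpoint_eq (point_mem_affineSpan_faceOpposite t hjk)
      (point_mem_affineSpan_faceOpposite t hij.symm)
  calc ∠ (t.points i) (t.points j) (t.points k)
      ≤ ∠ (t.points i) (t.points j) t.incenter + ∠ t.incenter (t.points j) (t.points k) :=
        angle_le_angle_add_angle _ _ _ _
    _ = ∠ t.incenter (t.points j) (t.touchpoint ∅ k) +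
          ∠ t.incenter (t.points j) (t.touchpoint ∅ i) := by
        rw [angle_comm (t.points i), (t.sbtw_touchpoint_empty hjk hij.symm hik.symm).angle_eq_right,
          (t.sbtw_touchpoint_empty hij.symm hjk hik).angle_eq_right]
    _ = 2 * ∠ t.incenter (t.points j) (t.touchpoint ∅ i) := by rw [hsame, two_mul]

theorem dist_touchpoint_le_cot_mul_inradius (hij : i ≠ j) (hik : i ≠ k) (hjk : j ≠ k)
    (hθ : 0 < θ) (hangle : θ ≤ ∠ (t.points i) (t.points j) (t.points k)) :
    dist (t.points j) (t.touchpoint ∅ i) ≤ Real.cot (θ / 2) * t.inradius := by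
  have hface : t.points j ∈ affineSpan ℝ (Set.range (t.faceOpposite i).points) :=
    point_mem_affineSpan_faceOpposite t hij.symm
  have hacute : ∠ t.incenter (t.points j) (t.touchpoint ∅ i) < π / 2 := by
    rw [angle_comm]
    exact angle_lt_pi_div_two_of_angle_eq_pi_div_two
      (angle_incenter_touchpoint_eq_pi_div_two t hface) (t.touchpoint_empty_ne_point i j).symm
  have hhalf : θ / 2 ≤ ∠ t.incenter (t.points j) (t.touchpoint ∅ i) := by
    linarith [angle_le_two_mul_angle_incenter_touchpoint t hij hik hjk]
  rw [dist_touchpoint_eq_cot_mul_inradius t hface]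
  exact mul_le_mul_of_nonneg_right
    (antitoneOn_cot ⟨by linarith, by linarith⟩ ⟨by linarith, by linarith⟩ hhalf) t.inradius_pos.le

theorem dist_points_le_two_mul_cot_mul_inradius (hij : i ≠ j) (hik : i ≠ k) (hjk : j ≠ k)
    (hθ : 0 < θ) (hj : θ ≤ ∠ (t.points i) (t.points j) (t.points k))
    (hk : θ ≤ ∠ (t.points i) (t.points k) (t.points j)) :
    dist (t.points j) (t.points k) ≤ 2 * Real.cot (θ / 2) * t.inradius :=
  calc dist (t.points j) (t.points k)
      ≤ dist (t.points j) (t.touchpoint ∅ i) + dist (t.points k) (t.touchpoint ∅ i) :=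
        dist_triangle_right _ _ _
    _ ≤ Real.cot (θ / 2) * t.inradius + Real.cot (θ / 2) * t.inradius :=
        add_le_add (dist_touchpoint_le_cot_mul_inradius t hij hik hjk hθ hj)
          (dist_touchpoint_le_cot_mul_inradius t hik hij hjk.symm hθ hk)
    _ = 2 * Real.cot (θ / 2) * t.inradius := by ring

end Triangle

theorem diam_closedInterior_le_two_mul_cot_mul_inradius {V : Type*} [NormedAddCommGroup V]
    [InnerProductSpace ℝ V] (t : Affine.Triangle ℝ V) {θ : ℝ} (hθ : 0 < θ)
    (hangle : ∀ i j k, i ≠ j → i ≠ k → j ≠ k → θ ≤ ∠ (t.points i) (t.points j) (t.points k)) :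
    diam t.closedInterior ≤ 2 * Real.cot (θ / 2) * t.inradius := by
  have hcot : 0 ≤ Real.cot (θ / 2) :=
    cot_half_nonneg_of_le_angle hθ (hangle 0 1 2 (by decide) (by decide) (by decide))
  refine diam_closedInterior_le t fun j k => ?_
  rcases eq_or_ne j k with rfl | hjk
  · rw [dist_self]
    exact mul_nonneg (mul_nonneg zero_le_two hcot) t.inradius_pos.le
  · obtain ⟨i, hij, hik⟩ : ∃ i, i ≠ j ∧ i ≠ k := by decide +revert
    exact dist_points_le_two_mul_cot_mul_inradius t hij hik hjk hθ (hangle i j k hij hik hjk)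
      (hangle i k j hik hij hjk.symm)

theorem diameter_le_cot_mul_inradius_general {V : Type*} [NormedAddCommGroup V]
    [InnerProductSpace ℝ V] (hV : finrank ℝ V = 2) {θ : ℝ} (hθ : 0 < θ) {A B C : V}
    (h : AffineIndependent ℝ ![A, B, C]) (hA : θ ≤ ∠ B A C) (hB : θ ≤ ∠ A B C)
    (hC : θ ≤ ∠ A C B) :
    diam (convexHull ℝ {A, B, C}) ≤
      2 * Real.cot (θ / 2) * inradius (convexHull ℝ {A, B, C}) := by
  let t : Affine.Triangle ℝ V := ⟨![A, B, C], h⟩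
  have hull : convexHull ℝ {A, B, C} = t.closedInterior := by
    rw [← t.convexHull_eq_closedInterior, Matrix.range_cons,
      Matrix.range_cons_cons_empty, Set.singleton_union]
  have hangle (i j k : Fin 3) (hij : i ≠ j) (hik : i ≠ k) (hjk : j ≠ k) :
      θ ≤ ∠ (t.points i) (t.points j) (t.points k) := by
    fin_cases i <;> fin_cases j <;> fin_cases k <;> simp_all [t, angle_comm]
  rw [hull]
  calc diam t.closedInterior
      ≤ 2 * Real.cot (θ / 2) * t.inradius :=
        diam_closedInterior_le_two_mul_cot_mul_inradius t hθ hangle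
    _ ≤ 2 * Real.cot (θ / 2) * inradius t.closedInterior :=
        mul_le_mul_of_nonneg_left (simplex_inradius_le_inradius_closedInterior t hV)
          (mul_nonneg zero_le_two (cot_half_nonneg_of_le_angle hθ hA))

/-- If all interior angles of a nondegenerate triangle are at least `θ`
(with `0 < θ ≤ π/3`), then the diameter of the triangular region is at most
`2 · cot(θ/2)` times the inradius. -/
theorem diameter_le_cot_mul_inradius (θ : ℝ) (hθ₀ : 0 < θ) (hθ₁ : θ ≤ π / 3)
    (A B C : EuclideanSpace ℝ (Fin 2)) (h : AffineIndependent ℝ ![A, B, C])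
    (hA : θ ≤ EuclideanGeometry.angle B A C)
    (hB : θ ≤ EuclideanGeometry.angle A B C)
    (hC : θ ≤ EuclideanGeometry.angle A C B) :
    Metric.diam (triangleRegion A B C) ≤
      2 * Real.cot (θ / 2) * triangleInradius A B C :=
  diameter_le_cot_mul_inradius_general finrank_euclideanSpace_fin hθ₀ h hA hB hC
end

section
/- Let θ be a real number with 0 < θ ≤ π/3, and let A, B, C be affinely independent points in the Euclidean plane ℝ² such that all three interior angles of the triangle ABC are at least θ. Let D denote the diameter of the triangular region, P its perimeter, and r > 0 its inradius. Then the simplicial regularity quantity (4/π)·D·P/r² + 2·D/r is at most (48/π)·cot(θ/2)² + 4·cot(θ/2). (Here (4/π)·D·P/r² is D·P divided by the area π·(r/2)² of a disk of radius r/2.) -/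
open Real EuclideanGeometry Metric

/-!
Let `ρ` be the radius of the incircle and let `T` be the point where it touches the side `AB`.
The line from `A` to the incenter `I` bisects the angle at `A`, so the right triangle `ITA` has an
angle at least `θ / 2` at `A`, and hence `AT ≤ ρ cot (θ / 2)`. Likewise `BT ≤ ρ cot (θ / 2)`, so
every side is at most `2 ρ cot (θ / 2)`. The incircle bounds a disk inside the triangle, so `ρ ≤ r`,
and the diameter, being the longest side, is at most `2 r cot (θ / 2)`, while the perimeter is at
most `6 r cot (θ / 2)`.
-/

lemma bddAbove_setOf_closedBall_subset {E : Type*} [NormedAddCommGroup E] [NormedSpace ℝ E]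
    [Nontrivial E] {s : Set E} (hs : Bornology.IsBounded s) :
    BddAbove {r : ℝ | 0 ≤ r ∧ ∃ c : E, closedBall c r ⊆ s} := by
  refine ⟨diam s / 2, ?_⟩
  rintro r ⟨hr, c, hc⟩
  have h2r : 2 * r ≤ diam s := diam_closedBall_eq c hr ▸ diam_mono hc hs
  linarith

lemma cot_nonneg_of_nonneg_of_le_pi_div_two {x : ℝ} (hx₀ : 0 ≤ x) (hx : x ≤ π / 2) :
    0 ≤ Real.cot x := by
  rw [Real.cot_eq_cos_div_sin]
  exact div_nonneg (cos_nonneg_of_neg_pi_div_two_le_of_le (by linarith) hx)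
    (sin_nonneg_of_nonneg_of_le_pi hx₀ (by linarith))

section InnerProductSpace

variable {V P : Type*} [NormedAddCommGroup V] [InnerProductSpace ℝ V] [MetricSpace P]
  [NormedAddTorsor V P]

lemma dist_le_dist_mul_cot_of_le_angle {p₁ p₂ p₃ : P} {α : ℝ} (h : ∠ p₁ p₂ p₃ = π / 2)
    (hp : p₃ ≠ p₂) (hα₀ : 0 < α) (hα : α ≤ ∠ p₂ p₃ p₁) :
    dist p₃ p₂ ≤ dist p₁ p₂ * Real.cot α := by
  have hβ : ∠ p₂ p₃ p₁ < π / 2 := angle_lt_pi_div_two_of_angle_eq_pi_div_two h hp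
  have htan : Real.tan α ≤ Real.tan (∠ p₂ p₃ p₁) :=
    Real.strictMonoOn_tan.monotoneOn ⟨by linarith, by linarith⟩ ⟨by linarith, hβ⟩ hα
  rw [← inv_inv (Real.cot α), Real.cot_inv_eq_tan, ← div_eq_mul_inv,
    le_div_iff₀ (Real.tan_pos_of_pos_of_lt_pi_div_two hα₀ (hα.trans_lt hβ)), mul_comm]
  calc Real.tan α * dist p₃ p₂ ≤ Real.tan (∠ p₂ p₃ p₁) * dist p₃ p₂ := by gcongr
    _ = dist p₁ p₂ := tan_angle_mul_dist_of_angle_eq_pi_div_two h (.inr hp)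

lemma signedInfDist_sub_signedInfDist_le_dist (S : AffineSubspace ℝ P) [Nonempty S]
    [S.direction.HasOrthogonalProjection] (p x y : P) :
    S.signedInfDist p x - S.signedInfDist p y ≤ dist x y := by
  rw [AffineSubspace.signedInfDist_def, signedDist_triangle_left, dist_comm]
  exact signedDist_le_dist _ _ _

section Simplex

variable {n : ℕ} [NeZero n] (s : Affine.Simplex ℝ P n)

lemma mem_closedInterior_of_forall_signedInfDist_nonneg {x : P}
    (hx : x ∈ affineSpan ℝ (Set.range s.points)) (h : ∀ i, 0 ≤ s.signedInfDist i x) :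
    x ∈ s.closedInterior := by
  obtain ⟨w, hw, rfl⟩ := eq_affineCombination_of_mem_affineSpan_of_fintype hx
  have hw_nonneg (i) : 0 ≤ w i := by
    have hi := h i
    rw [s.signedInfDist_affineCombination i hw, ← dist_eq_norm_vsub] at hi
    exact nonneg_of_mul_nonneg_left hi (s.height_pos i)
  refine (Affine.Simplex.affineCombination_mem_closedInterior_iff hw).2 fun i ↦
    ⟨hw_nonneg i, hw ▸ ?_⟩
  exact Finset.single_le_sum (fun j _ ↦ hw_nonneg j) (Finset.mem_univ i)

lemma closedBall_incenter_inradius_inter_affineSpan_subset_closedInterior :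
    closedBall s.incenter s.inradius ∩ affineSpan ℝ (Set.range s.points) ⊆ s.closedInterior := by
  rintro x ⟨hball, hspan⟩
  refine mem_closedInterior_of_forall_signedInfDist_nonneg s hspan fun i ↦ ?_
  have hLip : s.signedInfDist i s.incenter - s.signedInfDist i x ≤ dist s.incenter x :=
    signedInfDist_sub_signedInfDist_le_dist _ _ _ _
  rw [s.signedInfDist_incenter] at hLip
  linarith [mem_closedBall'.1 hball]

end Simplex

section Triangle

variable (t : Affine.Triangle ℝ P) {i j k : Fin 3}

lemma angle_le_two_mul_angle_touchpoint_incenter (hij : i ≠ j) (hik : i ≠ k) (hjk : j ≠ k) :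
    ∠ (t.points j) (t.points i) (t.points k) ≤
      2 * ∠ (t.touchpoint ∅ k) (t.points i) t.incenter := by
  have hbisect : ∠ t.incenter (t.points i) (t.touchpoint ∅ k) =
      ∠ t.incenter (t.points i) (t.touchpoint ∅ j) :=
    Affine.Simplex.angle_incenter_touchpoint_eq (by simpa using! hik) (by simpa using! hij)
  calc ∠ (t.points j) (t.points i) (t.points k)
      = ∠ (t.touchpoint ∅ k) (t.points i) (t.touchpoint ∅ j) := by
        rw [(t.sbtw_touchpoint_empty hik hij hjk.symm).angle_eq_left,
          (t.sbtw_touchpoint_empty hij hik hjk).angle_eq_right]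
    _ ≤ ∠ (t.touchpoint ∅ k) (t.points i) t.incenter +
          ∠ t.incenter (t.points i) (t.touchpoint ∅ j) := angle_le_angle_add_angle _ _ _ _
    _ = 2 * ∠ (t.touchpoint ∅ k) (t.points i) t.incenter := by
        rw [← hbisect, angle_comm t.incenter, two_mul]

lemma dist_touchpoint_le_inradius_mul_cot {θ : ℝ} (hθ : 0 < θ) (hij : i ≠ j) (hik : i ≠ k)
    (hjk : j ≠ k) (h : θ ≤ ∠ (t.points j) (t.points i) (t.points k)) :
    dist (t.points i) (t.touchpoint ∅ k) ≤ t.inradius * Real.cot (θ / 2) := by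
  have hright : ∠ t.incenter (t.touchpoint ∅ k) (t.points i) = π / 2 :=
    angle_comm (t.points i) _ _ ▸
      (t.isTangentAt_insphere_touchpoint k).angle_eq_pi_div_two (by simpa using! hik)
  have hangle := angle_le_two_mul_angle_touchpoint_incenter t hij hik hjk
  rw [← t.dist_incenter k]
  exact dist_le_dist_mul_cot_of_le_angle hright (t.touchpoint_empty_ne_point k i).symm
    (by linarith) (by linarith)

lemma dist_le_two_mul_inradius_mul_cot {θ : ℝ} (hθ : 0 < θ) (hij : i ≠ j) (hik : i ≠ k)
    (hjk : j ≠ k) (hi : θ ≤ ∠ (t.points j) (t.points i) (t.points k))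
    (hj : θ ≤ ∠ (t.points i) (t.points j) (t.points k)) :
    dist (t.points i) (t.points j) ≤ 2 * (t.inradius * Real.cot (θ / 2)) := by
  rw [← (t.sbtw_touchpoint_empty hik hij hjk.symm).wbtw.dist_add_dist, dist_comm _ (t.points j),
    two_mul]
  exact add_le_add (dist_touchpoint_le_inradius_mul_cot t hθ hij hik hjk hi)
    (dist_touchpoint_le_inradius_mul_cot t hθ hij.symm hjk hik hj)

end Triangle

end InnerProductSpace

section Plane

variable {A B C : EuclideanSpace ℝ (Fin 2)}

lemma diam_triangleRegion (A B C : EuclideanSpace ℝ (Fin 2)) :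
    diam (triangleRegion A B C) = max (max (dist A B) (dist A C)) (dist B C) := by
  rw [triangleRegion, convexHull_diam, diam_triple]

lemma triangleRegion_eq_closedInterior (h : AffineIndependent ℝ ![A, B, C]) :
    triangleRegion A B C = Affine.Simplex.closedInterior ⟨![A, B, C], h⟩ := by
  rw [← Affine.Simplex.convexHull_eq_closedInterior, triangleRegion, Matrix.range_cons,
    Matrix.range_cons_cons_empty, Set.singleton_union]

lemma inradius_le_triangleInradius (h : AffineIndependent ℝ ![A, B, C]) :
    Affine.Simplex.inradius ⟨![A, B, C], h⟩ ≤ triangleInradius A B C := by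
  let t : Affine.Triangle ℝ (EuclideanSpace ℝ (Fin 2)) := ⟨![A, B, C], h⟩
  have hspan : affineSpan ℝ (Set.range t.points) = ⊤ :=
    t.span_eq_top (by simp)
  have hball := closedBall_incenter_inradius_inter_affineSpan_subset_closedInterior t
  rw [hspan, AffineSubspace.top_coe, Set.inter_univ, ← triangleRegion_eq_closedInterior h] at hball
  have hbdd : Bornology.IsBounded (triangleRegion A B C) :=
    isBounded_convexHull.2 (Set.toFinite _).isBounded
  exact le_csSup (bddAbove_setOf_closedBall_subset hbdd) ⟨t.inradius_pos.le, t.incenter, hball⟩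

lemma dist_le_two_mul_triangleInradius_mul_cot (h : AffineIndependent ℝ ![A, B, C]) {θ : ℝ}
    (hθ : 0 < θ) {i j k : Fin 3} (hij : i ≠ j) (hik : i ≠ k) (hjk : j ≠ k)
    (hi : θ ≤ ∠ (![A, B, C] j) (![A, B, C] i) (![A, B, C] k))
    (hj : θ ≤ ∠ (![A, B, C] i) (![A, B, C] j) (![A, B, C] k)) :
    dist (![A, B, C] i) (![A, B, C] j) ≤ 2 * (triangleInradius A B C * Real.cot (θ / 2)) := by
  let t : Affine.Triangle ℝ (EuclideanSpace ℝ (Fin 2)) := ⟨![A, B, C], h⟩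
  have hdist : dist (t.points i) (t.points j) ≤ 2 * (t.inradius * Real.cot (θ / 2)) :=
    dist_le_two_mul_inradius_mul_cot t hθ hij hik hjk hi hj
  have hθ_le : θ ≤ π := hi.trans (angle_le_pi _ _ _)
  have hcot : 0 ≤ Real.cot (θ / 2) :=
    cot_nonneg_of_nonneg_of_le_pi_div_two (by linarith) (by linarith)
  have hρ : t.inradius ≤ triangleInradius A B C := inradius_le_triangleInradius h
  exact hdist.trans (by gcongr)

end Plane

/-- If all interior angles of a nondegenerate triangle are at least `θ`
(with `0 < θ ≤ π/3`), then the simplicial regularity quantity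
`(4/π)·D·P/r² + 2·D/r` (with `D` the diameter, `P` the perimeter and `r > 0`
the inradius) is at most `(48/π)·cot(θ/2)² + 4·cot(θ/2)`. -/
theorem regularity_le_of_angle_bound (θ : ℝ) (hθ₀ : 0 < θ) (hθ₁ : θ ≤ π / 3)
    (A B C : EuclideanSpace ℝ (Fin 2)) (h : AffineIndependent ℝ ![A, B, C])
    (hA : θ ≤ EuclideanGeometry.angle B A C)
    (hB : θ ≤ EuclideanGeometry.angle A B C)
    (hC : θ ≤ EuclideanGeometry.angle A C B)
    (D P r : ℝ)
    (hD : D = Metric.diam (triangleRegion A B C))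
    (hP : P = dist A B + dist B C + dist C A)
    (hr : r = triangleInradius A B C) (hrpos : 0 < r) :
    4 / π * D * P / r ^ 2 + 2 * D / r ≤
      48 / π * Real.cot (θ / 2) ^ 2 + 4 * Real.cot (θ / 2) := by
  set K := Real.cot (θ / 2)
  have hAB : dist A B ≤ 2 * (r * K) := hr ▸ dist_le_two_mul_triangleInradius_mul_cot h hθ₀
    (i := 0) (j := 1) (k := 2) (by decide) (by decide) (by decide) hA hB
  have hBC : dist B C ≤ 2 * (r * K) := hr ▸ dist_le_two_mul_triangleInradius_mul_cot h hθ₀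
    (i := 1) (j := 2) (k := 0) (by decide) (by decide) (by decide)
    (angle_comm A B C ▸ hB) (angle_comm A C B ▸ hC)
  have hCA : dist C A ≤ 2 * (r * K) := hr ▸ dist_le_two_mul_triangleInradius_mul_cot h hθ₀
    (i := 2) (j := 0) (k := 1) (by decide) (by decide) (by decide) hC (angle_comm B A C ▸ hA)
  have hD_le : D ≤ 2 * (r * K) := by
    rw [hD, diam_triangleRegion, dist_comm A C]
    exact max_le (max_le hAB hCA) hBC
  have hK : 0 ≤ K :=
    cot_nonneg_of_nonneg_of_le_pi_div_two (by linarith) (by linarith [pi_pos])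
  have hP_le : P ≤ 6 * (r * K) := by linarith
  have hP_nonneg : 0 ≤ P := hP ▸ by positivity
  calc 4 / π * D * P / r ^ 2 + 2 * D / r
      ≤ 4 / π * (2 * (r * K)) * (6 * (r * K)) / r ^ 2 + 2 * (2 * (r * K)) / r := by gcongr
    _ = 48 / π * K ^ 2 + 4 * K := by field_simp; ring
end
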